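/- Let f : [a,b] → E(X,D) be a path with f(a), f(b) ∈ X (i.e. in the copy X × {o}). Then f is homotopic rel endpoints to a proper path, where a path g is proper if g(a), g(b) ∈ X and whenever ⟨u,v⟩ is a component of g^{-1}(E(X,D) \ X) with g(u) = g(v) ∈ X and g(⟨u,v⟩) ∩ X = ∅, the restriction g|[u,v] is either the fixed winding or its reverse on the circle C_d attached at some d ∈ D. -/

import Mathlib

open Classical

noncomputable section

namespace EarringPaper

variable {X : Type*} [MetricSpace X]

/-- The earring space `E(X,D)`: the base copy `X × {o}` together with a copy of the
circle attached at each point `d n` of the countable set `D = range d`. -/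
structure ESp (X : Type*) [MetricSpace X] (d : ℕ+ → X) where
  pt : X × Circle
  mem : pt.2 = 1 ∨ ∃ n : ℕ+, pt.1 = d n

/-- The scaling weight `1/n` at `x = d n` (and `0` off `D`). -/
def wt (d : ℕ+ → X) (x : X) : ℝ :=
  if h : ∃ n : ℕ+, x = d n then 1 / (h.choose : ℝ) else 0

/-- The earring metric `ρ` on `E(X,D)`. -/
def rho (d : ℕ+ → X) (p q : X × Circle) : ℝ :=
  if p.1 = q.1 ∧ ∃ n : ℕ+, p.1 = d n then wt d p.1 * dist p.2 q.2
  else dist p.1 q.1 + wt d p.1 * dist p.2 1 + wt d q.1 * dist q.2 1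

/-- `E(X,D)` carries the topology of the metric `ρ` (generated by the `ρ`-balls). -/
instance (d : ℕ+ → X) : TopologicalSpace (ESp X d) :=
  TopologicalSpace.generateFrom
    {s | ∃ (p : ESp X d) (r : ℝ), s = {q : ESp X d | rho d p.pt q.pt < r}}

/-- The points of the base copy `X × {o}` of `X` inside `E(X,D)`. -/
def InX {d : ℕ+ → X} (p : ESp X d) : Prop := p.pt.2 = 1

/-- The inclusion `X → E(X,D)`, `x ↦ (x,o)`. -/
def emb (d : ℕ+ → X) (x : X) : ESp X d := ⟨(x, 1), Or.inl rfl⟩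

/-- `f` traverses, on `[u,v]`, the fixed winding of the circle attached at `d n`. -/
def IsWinding (d : ℕ+ → X) (f : ℝ → ESp X d) (u v : ℝ) (n : ℕ+) : Prop :=
  ∃ φ : ℝ → ℝ, ContinuousOn φ (Set.Icc u v) ∧ MonotoneOn φ (Set.Icc u v) ∧
    φ u = 0 ∧ φ v = 1 ∧
    ∀ t ∈ Set.Icc u v, (f t).pt = (d n, Circle.exp (2 * Real.pi * φ t))

/-- `f` traverses, on `[u,v]`, the reverse of the fixed winding of the circle at `d n`. -/
def IsRevWinding (d : ℕ+ → X) (f : ℝ → ESp X d) (u v : ℝ) (n : ℕ+) : Prop :=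
  ∃ φ : ℝ → ℝ, ContinuousOn φ (Set.Icc u v) ∧ MonotoneOn φ (Set.Icc u v) ∧
    φ u = 0 ∧ φ v = 1 ∧
    ∀ t ∈ Set.Icc u v, (f t).pt = (d n, Circle.exp (-(2 * Real.pi) * φ t))

/-- A proper path in `E(X,D)` (with domain `[a,b]`): its endpoints lie in `X`, and each
maximal excursion out of `X` returning to the same point is a single winding or reverse
winding of one of the attached circles. -/
def IsProper (d : ℕ+ → X) (f : ℝ → ESp X d) (a b : ℝ) : Prop :=
  ContinuousOn f (Set.Icc a b) ∧ InX (f a) ∧ InX (f b) ∧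
  ∀ u v, a ≤ u → u < v → v ≤ b → InX (f u) → InX (f v) →
    (∀ t ∈ Set.Ioo u v, ¬InX (f t)) → f u = f v →
    ∃ n : ℕ+, IsWinding d f u v n ∨ IsRevWinding d f u v n

/-- Homotopy of paths `[a,b] → E(X,D)` relative to the endpoints. -/
def HtpyRel (d : ℕ+ → X) (f g : ℝ → ESp X d) (a b : ℝ) : Prop :=
  ∃ H : ℝ × ℝ → ESp X d,
    ContinuousOn H (Set.Icc a b ×ˢ Set.Icc (0 : ℝ) 1) ∧
    (∀ s ∈ Set.Icc a b, H (s, 0) = f s ∧ H (s, 1) = g s) ∧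
    (∀ t ∈ Set.Icc (0 : ℝ) 1, H (a, t) = f a ∧ H (b, t) = f b)

/-- `Y` is locally simply connected: every point has a neighborhood basis of simply
connected neighborhoods. -/
def LocSimplyConnected (Y : Type*) [TopologicalSpace Y] : Prop :=
  ∀ y : Y, ∀ U ∈ nhds y, ∃ V ∈ nhds y, V ⊆ U ∧ SimplyConnectedSpace V

end EarringPaper

/-!
On the closure of an excursion off `X` the path stays in a single circle, so it lifts through the
exponential to a real angle function starting at `0`. As the excursion misses the base point, the
angle ends at `0` or `±2π`; an affine homotopy of angles then contracts the excursion to the base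
point or makes it a winding or a reverse winding. During this homotopy the distance from `X` never
exceeds the maximum it had on the excursion. Since only finitely many excursions reach a given
positive height, the homotopies of all the excursions together form one continuous homotopy.
-/

namespace EarringPaper

open Set Filter Topology Metric unitInterval

section Metric

lemma wt_nonneg {X : Type*} (d : ℕ+ → X) (x : X) : 0 ≤ wt d x := by
  unfold wt
  split_ifs <;> positivity

lemma wt_pos {X : Type*} (d : ℕ+ → X) (n : ℕ+) : 0 < wt d (d n) := by
  have h : ∃ m, d n = d m := ⟨n, rfl⟩
  have := h.choose.pos
  rw [wt, dif_pos h]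
  positivity

lemma wt_eq_zero {X : Type*} {d : ℕ+ → X} {x : X} (h : ¬∃ n, x = d n) : wt d x = 0 :=
  dif_neg h

variable {X : Type*} [MetricSpace X] {d : ℕ+ → X}

lemma rho_of_fst_eq {p q : X × Circle} (h : p.1 = q.1) :
    rho d p q = wt d p.1 * dist p.2 q.2 := by
  by_cases hD : ∃ n, p.1 = d n
  · rw [rho, if_pos ⟨h, hD⟩]
  · rw [rho, if_neg (fun H => hD H.2), ← h, wt_eq_zero hD, dist_self]
    ring

lemma rho_of_fst_ne {p q : X × Circle} (h : p.1 ≠ q.1) :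
    rho d p q = dist p.1 q.1 + wt d p.1 * dist p.2 1 + wt d q.1 * dist q.2 1 :=
  if_neg fun H => h H.1

lemma rho_self (p : X × Circle) : rho d p p = 0 := by
  rw [rho_of_fst_eq rfl, dist_self, mul_zero]

lemma rho_comm (p q : X × Circle) : rho d p q = rho d q p := by
  by_cases h : p.1 = q.1
  · rw [rho_of_fst_eq h, rho_of_fst_eq h.symm, h, dist_comm]
  · rw [rho_of_fst_ne h, rho_of_fst_ne (Ne.symm h), dist_comm p.1]
    ring

lemma rho_triangle (p q r : X × Circle) : rho d p r ≤ rho d p q + rho d q r := by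
  have hp := wt_nonneg d p.1
  have hq := mul_nonneg (wt_nonneg d q.1) (dist_nonneg (x := q.2) (y := 1))
  have hr := wt_nonneg d r.1
  by_cases hpq : p.1 = q.1 <;> by_cases hqr : q.1 = r.1
  · rw [rho_of_fst_eq hpq, rho_of_fst_eq hqr, rho_of_fst_eq (hpq.trans hqr), ← hpq, ← mul_add]
    exact mul_le_mul_of_nonneg_left (dist_triangle _ _ _) hp
  · rw [rho_of_fst_eq hpq, rho_of_fst_ne hqr, rho_of_fst_ne (hpq ▸ hqr), ← hpq]
    linarith [mul_le_mul_of_nonneg_left (dist_triangle p.2 q.2 1) hp]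
  · rw [rho_of_fst_ne hpq, rho_of_fst_eq hqr, rho_of_fst_ne (hqr ▸ hpq), hqr]
    linarith [mul_le_mul_of_nonneg_left (dist_triangle_left r.2 1 q.2) hr]
  · rw [rho_of_fst_ne hpq, rho_of_fst_ne hqr]
    by_cases hpr : p.1 = r.1
    · rw [rho_of_fst_eq hpr, ← hpr]
      linarith [mul_le_mul_of_nonneg_left (dist_triangle_right p.2 r.2 1) hp,
        dist_nonneg (x := p.1) (y := q.1), dist_nonneg (x := q.1) (y := p.1)]
    · rw [rho_of_fst_ne hpr]
      linarith [dist_triangle p.1 q.1 r.1]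

lemma dist_fst_le_rho (p q : X × Circle) : dist p.1 q.1 ≤ rho d p q := by
  by_cases h : p.1 = q.1
  · rw [rho_of_fst_eq h, h, dist_self]
    exact mul_nonneg (wt_nonneg d q.1) dist_nonneg
  · rw [rho_of_fst_ne h]
    linarith [mul_nonneg (wt_nonneg d p.1) (dist_nonneg (x := p.2) (y := 1)),
      mul_nonneg (wt_nonneg d q.1) (dist_nonneg (x := q.2) (y := 1))]

lemma ESp.pt_injective : Function.Injective (ESp.pt : ESp X d → X × Circle) := by
  rintro ⟨p, _⟩ ⟨q, _⟩ rfl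
  rfl

lemma eq_of_rho_eq_zero {p q : ESp X d} (h : rho d p.pt q.pt = 0) : p = q := by
  have hfst : p.pt.1 = q.pt.1 := dist_le_zero.1 (h ▸ dist_fst_le_rho (d := d) p.pt q.pt)
  refine ESp.pt_injective (Prod.ext hfst ?_)
  by_cases hD : ∃ n, p.pt.1 = d n
  · obtain ⟨n, hn⟩ := hD
    rw [rho_of_fst_eq hfst, hn] at h
    exact dist_eq_zero.1 ((mul_eq_zero.1 h).resolve_left (wt_pos d n).ne')
  · rw [p.mem.resolve_right hD, q.mem.resolve_right (hfst ▸ hD)]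

lemma isOpen_iff_rho {s : Set (ESp X d)} :
    IsOpen s ↔ ∀ p ∈ s, ∃ ε > 0, ∀ q : ESp X d, rho d p.pt q.pt < ε → q ∈ s := by
  constructor
  · intro hs
    induction hs with
    | basic s hs =>
      obtain ⟨c, r, rfl⟩ := hs
      intro p (hp : rho d c.pt p.pt < r)
      refine ⟨r - rho d c.pt p.pt, sub_pos.2 hp, fun q hq => ?_⟩
      change rho d c.pt q.pt < r
      linarith [rho_triangle (d := d) c.pt p.pt q.pt]
    | univ => exact fun p _ => ⟨1, one_pos, fun q _ => mem_univ q⟩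
    | inter s t _ _ hs ht =>
      intro p hp
      obtain ⟨ε, hε, hs⟩ := hs p hp.1
      obtain ⟨δ, hδ, ht⟩ := ht p hp.2
      exact ⟨min ε δ, lt_min hε hδ, fun q hq =>
        ⟨hs q (hq.trans_le (min_le_left _ _)), ht q (hq.trans_le (min_le_right _ _))⟩⟩
    | sUnion S _ hS =>
      intro p ⟨s, hs, hp⟩
      obtain ⟨ε, hε, h⟩ := hS s hs p hp
      exact ⟨ε, hε, fun q hq => ⟨s, hs, h q hq⟩⟩
  · intro hs
    refine isOpen_iff_forall_mem_open.2 fun p hp => ?_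
    obtain ⟨ε, hε, h⟩ := hs p hp
    exact ⟨{q | rho d p.pt q.pt < ε}, h, TopologicalSpace.isOpen_generateFrom_of_mem ⟨p, ε, rfl⟩,
      (rho_self p.pt).trans_lt hε⟩

/-- `E(X,D)` as a metric space under the earring metric `ρ`, inducing the given topology. -/
instance : MetricSpace (ESp X d) :=
  .ofDistTopology (fun p q => rho d p.pt q.pt) (fun p => rho_self p.pt)
    (fun p q => rho_comm p.pt q.pt) (fun p q r => rho_triangle p.pt q.pt r.pt)
    (fun _ => isOpen_iff_rho) fun _ _ => eq_of_rho_eq_zero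

lemma dist_def (p q : ESp X d) : dist p q = rho d p.pt q.pt := rfl

/-- The distance of a point of `E(X,D)` from its projection to the base copy of `X`. -/
def height (p : ESp X d) : ℝ := dist p (emb d p.pt.1)

lemma height_eq (p : ESp X d) : height p = wt d p.pt.1 * dist p.pt.2 1 :=
  rho_of_fst_eq rfl

lemma height_nonneg (p : ESp X d) : 0 ≤ height p := dist_nonneg

lemma height_of_inX {p : ESp X d} (hp : InX p) : height p = 0 := by
  rw [height_eq, hp, dist_self, mul_zero]

lemma height_pos {p : ESp X d} (hp : ¬InX p) : 0 < height p :=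
  dist_pos.2 fun h => hp (congrArg (fun q : ESp X d => q.pt.2) h)

lemma dist_of_fst_ne {p q : ESp X d} (h : p.pt.1 ≠ q.pt.1) :
    dist p q = dist p.pt.1 q.pt.1 + height p + height q := by
  rw [dist_def, rho_of_fst_ne h, height_eq, height_eq]

lemma dist_of_inX {p : ESp X d} (hp : InX p) (q : ESp X d) :
    dist p q = dist p.pt.1 q.pt.1 + height q := by
  by_cases h : p.pt.1 = q.pt.1
  · rw [dist_def, rho_of_fst_eq h, h, dist_self, zero_add, hp, dist_comm, height_eq]
  · rw [dist_of_fst_ne h, height_of_inX hp, add_zero]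

lemma isometry_emb : Isometry (emb d) := .of_dist_eq fun x y => by
  have inX_emb (z : X) : InX (emb d z) := rfl
  rw [dist_of_inX (inX_emb x), height_of_inX (inX_emb y), add_zero]
  rfl

@[fun_prop]
lemma continuous_fst_pt : Continuous fun p : ESp X d => p.pt.1 :=
  (LipschitzWith.mk_one fun p q => dist_fst_le_rho p.pt q.pt).continuous

@[fun_prop]
lemma continuous_height : Continuous (height : ESp X d → ℝ) :=
  continuous_id.dist (isometry_emb.continuous.comp continuous_fst_pt)

lemma inX_iff_emb_eq {p : ESp X d} : InX p ↔ emb d p.pt.1 = p :=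
  ⟨fun h => ESp.pt_injective (Prod.ext rfl h.symm), fun h => h ▸ rfl⟩

lemma isClosed_setOf_inX : IsClosed {p : ESp X d | InX p} := by
  simp only [inX_iff_emb_eq]
  exact isClosed_eq (isometry_emb.continuous.comp continuous_fst_pt) continuous_id

lemma tendsto_nhds_iff_of_inX {α : Type*} {l : Filter α} {F : α → ESp X d} {p : ESp X d}
    (hp : InX p) : Tendsto F l (𝓝 p) ↔
      Tendsto (fun i => (F i).pt.1) l (𝓝 p.pt.1) ∧ Tendsto (fun i => height (F i)) l (𝓝 0) := by
  constructor
  · intro h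
    exact ⟨(continuous_fst_pt.tendsto p).comp h,
      height_of_inX hp ▸ (continuous_height.tendsto p).comp h⟩
  · rintro ⟨hfst, hheight⟩
    rw [tendsto_iff_dist_tendsto_zero] at hfst ⊢
    simpa [dist_comm _ p, dist_of_inX hp, dist_comm p.pt.1] using hfst.add hheight

lemma eventually_fst_eq {p : ESp X d} (hp : ¬InX p) : ∀ᶠ q in 𝓝 p, q.pt.1 = p.pt.1 := by
  filter_upwards [ball_mem_nhds p (height_pos hp)] with q hq
  by_contra hne
  rw [mem_ball', dist_of_fst_ne (Ne.symm hne)] at hq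
  linarith [dist_nonneg (x := p.pt.1) (y := q.pt.1), height_nonneg q]

/-- The circle of `E(X,D)` attached at `d n`. -/
def circleAt (d : ℕ+ → X) (n : ℕ+) (z : Circle) : ESp X d := ⟨(d n, z), Or.inr ⟨n, rfl⟩⟩

lemma inX_circleAt_iff {n : ℕ+} {z : Circle} : InX (circleAt d n z) ↔ z = 1 := Iff.rfl

lemma height_circleAt (n : ℕ+) (z : Circle) :
    height (circleAt d n z) = wt d (d n) * dist z 1 := height_eq _

lemma isEmbedding_circleAt (n : ℕ+) : IsEmbedding (circleAt d n) :=
  Dilation.isEmbedding (Dilation.mkOfDistEq (circleAt d n)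
    ⟨⟨wt d (d n), wt_nonneg d _⟩, NNReal.coe_ne_zero.1 (wt_pos d n).ne', fun _ _ =>
      rho_of_fst_eq rfl⟩)

end Metric

section Circle

lemma dist_circle_exp_one (x : ℝ) : dist (Circle.exp x) 1 = 2 * |Real.sin (x / 2)| := by
  change dist (Circle.exp x : ℂ) ((1 : Circle) : ℂ) = _
  rw [Circle.coe_exp, Complex.dist_eq, mul_comm, Circle.coe_one,
    Complex.norm_exp_I_mul_ofReal_sub_one, Real.norm_eq_abs, abs_mul, abs_two]

lemma dist_circle_exp_one_le {x y : ℝ} (hxy : |x| ≤ |y|) (hy : |y| ≤ Real.pi) :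
    dist (Circle.exp x) 1 ≤ dist (Circle.exp y) 1 := by
  have hcos : Real.cos y ≤ Real.cos x := by
    rw [← Real.cos_abs x, ← Real.cos_abs y]
    exact Real.cos_le_cos_of_nonneg_of_le_pi (abs_nonneg x) hy hxy
  rw [dist_circle_exp_one, dist_circle_exp_one]
  gcongr 2 * ?_
  refine sq_le_sq.1 ?_
  rw [Real.sin_sq_eq_half_sub, Real.sin_sq_eq_half_sub, mul_div_cancel₀ x two_ne_zero,
    mul_div_cancel₀ y two_ne_zero]
  linarith

lemma dist_one_le_dist_circle_exp {y : ℝ} (hy : |y| = Real.pi) (z : Circle) :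
    dist z 1 ≤ dist (Circle.exp y) 1 := by
  rw [← Circle.exp_arg z]
  exact dist_circle_exp_one_le (hy ▸ Complex.abs_arg_le_pi z) hy.le

lemma circle_exp_eq_one_iff_of_abs_lt {x : ℝ} (hx : |x| < 2 * Real.pi) :
    Circle.exp x = 1 ↔ x = 0 := by
  refine ⟨fun h => ?_, fun h => h ▸ Circle.exp_zero⟩
  obtain ⟨k, rfl⟩ := Circle.exp_eq_one.1 h
  rw [abs_mul, abs_of_pos Real.two_pi_pos, mul_lt_iff_lt_one_left Real.two_pi_pos] at hx
  simp [Int.abs_lt_one_iff.1 (by exact_mod_cast hx)]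

lemma exists_lift_Icc {E B : Type*} [TopologicalSpace E] [TopologicalSpace B] {p : E → B}
    (hp : IsCoveringMap p) {c : ℝ → B} {u v : ℝ} (huv : u ≤ v) (hc : ContinuousOn c (Icc u v))
    {e : E} (he : p e = c u) : ∃ L : C(ℝ, E), L u = e ∧ EqOn (p ∘ L) c (Icc u v) := by
  have : SimplyConnectedSpace ℝ := .ofContractible ℝ
  have hext {s} (hs : s ∈ Icc u v) := IccExtend_of_mem huv ((Icc u v).domRestrict c) hs
  obtain ⟨L, ⟨hLu, hL⟩, -⟩ := hp.existsUnique_continuousMap_lifts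
    ⟨_, (continuousOn_iff_continuous_domRestrict.1 hc).Icc_extend' (h := huv)⟩ u e
    (he.trans (hext (left_mem_Icc.2 huv)).symm)
  exact ⟨L, hLu, fun s hs => (congrFun hL s).trans (hext hs)⟩

lemma exists_abs_eq_of_lt_abs {L : ℝ → ℝ} {u s r : ℝ} (hus : u ≤ s)
    (hL : ContinuousOn L (Icc u s)) (hu : L u = 0) (hr : 0 < r) (hrs : r < |L s|) :
    ∃ x ∈ Ioo u s, |L x| = r :=
  intermediate_value_Ioo hus hL.abs ⟨by rwa [hu, abs_zero], hrs⟩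

variable {L : ℝ → ℝ} {u v : ℝ}

lemma lift_right_eq_zero_or_abs_eq (huv : u ≤ v) (hL : ContinuousOn L (Icc u v)) (hu : L u = 0)
    (hv : Circle.exp (L v) = 1) (hne : ∀ s ∈ Ioo u v, Circle.exp (L s) ≠ 1) :
    L v = 0 ∨ |L v| = 2 * Real.pi := by
  rcases lt_trichotomy |L v| (2 * Real.pi) with h | h | h
  · exact Or.inl ((circle_exp_eq_one_iff_of_abs_lt h).1 hv)
  · exact Or.inr h
  · obtain ⟨s, hs, hLs⟩ := exists_abs_eq_of_lt_abs huv hL hu Real.two_pi_pos h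
    refine absurd ?_ (hne s hs)
    rcases (abs_eq Real.two_pi_pos.le).1 hLs with h | h <;> simp [h, Circle.exp_neg]

/-- The affine homotopy from `L` to the affine function with the same values at `u` and `v`;
`t` is the homotopy parameter. -/
def straighten (L : ℝ → ℝ) (u v t s : ℝ) : ℝ :=
  AffineMap.lineMap (L s) (AffineMap.lineMap (L u) (L v) ((s - u) / (v - u))) t

lemma straighten_zero (s : ℝ) : straighten L u v 0 s = L s := by simp [straighten]

lemma straighten_one (hu : L u = 0) (s : ℝ) :
    straighten L u v 1 s = L v * ((s - u) / (v - u)) := by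
  simp [straighten, hu, AffineMap.lineMap_apply, mul_comm]

lemma straighten_left (t : ℝ) : straighten L u v t u = L u := by simp [straighten]

lemma straighten_right (huv : u < v) (t : ℝ) : straighten L u v t v = L v := by
  simp [straighten, div_self (sub_pos.2 huv).ne']

lemma abs_straighten_le (hu : L u = 0) (hv : L v = 0) {t : ℝ} (ht : t ∈ I) (s : ℝ) :
    |straighten L u v t s| ≤ |L s| := by
  have : straighten L u v t s = (1 - t) * L s := by
    rw [straighten, hu, hv, AffineMap.lineMap_same, AffineMap.const_apply,
      AffineMap.lineMap_apply_module]
    simp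
  rw [this, abs_mul, abs_of_nonneg (sub_nonneg.2 ht.2)]
  exact mul_le_of_le_one_left (abs_nonneg _) (by linarith [ht.1])

-- Either `L` reaches `±π`, the farthest point from `1`, or `L v = 0` and `|L|` only shrinks.
lemma exists_dist_exp_straighten_le (huv : u ≤ v) (hL : ContinuousOn L (Icc u v)) (hu : L u = 0)
    (hv : Circle.exp (L v) = 1) {t s : ℝ} (ht : t ∈ I) (hs : s ∈ Icc u v) :
    ∃ r ∈ Icc u v,
      dist (Circle.exp (straighten L u v t s)) 1 ≤ dist (Circle.exp (L r)) 1 := by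
  by_cases hpi : ∃ r ∈ Icc u v, |L r| = Real.pi
  · obtain ⟨r, hr, hLr⟩ := hpi
    exact ⟨r, hr, dist_one_le_dist_circle_exp hLr _⟩
  · have hle : ∀ r ∈ Icc u v, |L r| ≤ Real.pi := by
      intro r hr
      by_contra! h
      obtain ⟨x, hx, hLx⟩ := exists_abs_eq_of_lt_abs hr.1 (hL.mono (Icc_subset_Icc_right hr.2))
        hu Real.pi_pos h
      exact hpi ⟨x, ⟨hx.1.le, hx.2.le.trans hr.2⟩, hLx⟩
    have hLv : L v = 0 := (circle_exp_eq_one_iff_of_abs_lt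
      ((hle v (right_mem_Icc.2 huv)).trans_lt (by linarith [Real.pi_pos]))).1 hv
    exact ⟨s, hs, dist_circle_exp_one_le (abs_straighten_le hu hLv ht s) (hle s hs)⟩

end Circle

section Excursion

variable {X : Type*} [MetricSpace X] {d : ℕ+ → X} {f : ℝ → ESp X d} {u v : ℝ}

/-- An excursion of `f`: `(u, v)` is a bounded component of the set of times at which `f` is
off `X`. -/
structure IsExcursion (f : ℝ → ESp X d) (u v : ℝ) : Prop where
  lt : u < v
  left : InX (f u)
  right : InX (f v)
  not_inX : ∀ s ∈ Ioo u v, ¬InX (f s)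

lemma IsExcursion.mem_Ioo (h : IsExcursion f u v) {s : ℝ} (hs : s ∈ Icc u v)
    (hsX : ¬InX (f s)) : s ∈ Ioo u v :=
  ⟨hs.1.lt_of_ne fun hus => hsX (hus ▸ h.left), hs.2.lt_of_ne fun hsv => hsX (hsv ▸ h.right)⟩

lemma IsExcursion.eq_of_mem_Ioo {u' v' s : ℝ} (h : IsExcursion f u v) (h' : IsExcursion f u' v')
    (hs : s ∈ Ioo u v) (hs' : s ∈ Ioo u' v') : u = u' ∧ v = v' := by
  refine ⟨le_antisymm ?_ ?_, le_antisymm ?_ ?_⟩ <;> by_contra! hlt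
  · exact h'.not_inX u ⟨hlt, hs.1.trans hs'.2⟩ h.left
  · exact h.not_inX u' ⟨hlt, hs'.1.trans hs.2⟩ h'.left
  · exact h.not_inX v' ⟨hs.1.trans hs'.2, hlt⟩ h'.right
  · exact h'.not_inX v ⟨hs'.1.trans hs.2, hlt⟩ h.right

lemma exists_isExcursion (hf : Continuous f)
    (hbdd : Bornology.IsBounded {s | ¬InX (f s)}) {s : ℝ} (hs : ¬InX (f s)) :
    ∃ u v, IsExcursion f u v ∧ s ∈ Ioo u v := by
  have hclosed : IsClosed {r | InX (f r)} := isClosed_setOf_inX.preimage hf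
  obtain ⟨a, ha⟩ := hbdd.bddBelow
  obtain ⟨b, hb⟩ := hbdd.bddAbove
  have hleft : (Iic s ∩ {r | InX (f r)}).Nonempty :=
    ⟨a - 1, (sub_one_lt a).le.trans (ha hs), by_contra fun h => (sub_one_lt a).not_ge (ha h)⟩
  have hright : (Ici s ∩ {r | InX (f r)}).Nonempty :=
    ⟨b + 1, (hb hs).trans (lt_add_one b).le, by_contra fun h => (lt_add_one b).not_ge (hb h)⟩
  obtain ⟨⟨hus, huX⟩, hmax⟩ :=
    (isClosed_Iic.inter hclosed).isGreatest_csSup hleft (bddAbove_Iic.mono inter_subset_left)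
  obtain ⟨⟨hsv, hvX⟩, hmin⟩ :=
    (isClosed_Ici.inter hclosed).isLeast_csInf hright (bddBelow_Ici.mono inter_subset_left)
  have hus' := lt_of_le_of_ne (mem_Iic.1 hus) fun h => hs (h ▸ huX : InX (f s))
  have hsv' := lt_of_le_of_ne (mem_Ici.1 hsv) fun h => hs (h ▸ hvX : InX (f s))
  refine ⟨_, _, ⟨hus'.trans hsv', huX, hvX, fun r hr hrX => ?_⟩, hus', hsv'⟩
  rcases le_total r s with h | h
  · exact (hmax ⟨h, hrX⟩).not_gt hr.1
  · exact (hmin ⟨h, hrX⟩).not_gt hr.2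

lemma finite_setOf_isExcursion_le_height (hf : Continuous f)
    (hbdd : Bornology.IsBounded {s | ¬InX (f s)}) {ε : ℝ} (hε : 0 < ε) :
    {p : ℝ × ℝ | IsExcursion f p.1 p.2 ∧ ∃ r ∈ Icc p.1 p.2, ε ≤ height (f r)}.Finite := by
  have hoff {r} (hr : ε ≤ height (f r)) : ¬InX (f r) := fun h =>
    (hε.trans_le hr).ne' (height_of_inX h)
  have hcompact : IsCompact {r | ε ≤ height (f r)} :=
    isCompact_of_isClosed_isBounded (isClosed_le continuous_const (continuous_height.comp hf))
      (hbdd.subset fun _ => hoff)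
  obtain ⟨S, hSexc, hSfin, hS⟩ := hcompact.elim_finite_subcover_image
    (b := {p : ℝ × ℝ | IsExcursion f p.1 p.2}) (c := fun p => Ioo p.1 p.2)
    (fun _ _ => isOpen_Ioo) fun r hr => by
      obtain ⟨u, v, huv, hruv⟩ := exists_isExcursion hf hbdd (hoff hr)
      exact mem_biUnion (x := (u, v)) huv hruv
  refine hSfin.subset ?_
  rintro p ⟨hp, r, hrp, hr⟩
  obtain ⟨q, hqS, hrq⟩ := mem_iUnion₂.1 (hS hr)
  obtain ⟨hfst, hsnd⟩ := hp.eq_of_mem_Ioo (hSexc hqS) (hp.mem_Ioo hrp (hoff hr)) hrq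
  rwa [Prod.ext hfst hsnd]

lemma IsExcursion.exists_fst_eq (h : IsExcursion f u v) (hf : Continuous f) :
    ∃ n, ∀ s ∈ Icc u v, (f s).pt.1 = d n := by
  obtain ⟨m, hm⟩ := exists_between h.lt
  obtain ⟨n, hn⟩ := (f m).mem.resolve_left (h.not_inX m hm)
  have : PreconnectedSpace (Ioo u v) := Subtype.preconnectedSpace isPreconnected_Ioo
  have hloc : IsLocallyConstant fun s : Ioo u v => (f s).pt.1 :=
    (IsLocallyConstant.iff_eventually_eq _).2 fun s =>
      (hf.comp continuous_subtype_val).continuousAt.eventually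
        (eventually_fst_eq (h.not_inX s s.2))
  have hIoo : EqOn (fun s => (f s).pt.1) (fun _ => d n) (Ioo u v) := fun s hs =>
    (hloc.apply_eq_of_preconnectedSpace ⟨s, hs⟩ ⟨m, hm⟩).trans hn
  exact ⟨n, hIoo.of_subset_closure (continuous_fst_pt.comp hf).continuousOn continuousOn_const
    Ioo_subset_Icc_self (closure_Ioo h.lt.ne).ge⟩

lemma IsExcursion.exists_angle (h : IsExcursion f u v) (hf : Continuous f) :
    ∃ (n : ℕ+) (L : C(ℝ, ℝ)), L u = 0 ∧
      ∀ s ∈ Icc u v, f s = circleAt d n (Circle.exp (L s)) := by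
  obtain ⟨n, hn⟩ := h.exists_fst_eq hf
  have hfn : EqOn (fun s => circleAt d n (f s).pt.2) f (Icc u v) := fun s hs =>
    ESp.pt_injective (Prod.ext (hn s hs).symm rfl)
  have hsnd : ContinuousOn (fun s => (f s).pt.2) (Icc u v) :=
    (isEmbedding_circleAt n).continuousOn_iff.2 (hf.continuousOn.congr hfn)
  obtain ⟨L, hLu, hL⟩ := exists_lift_Icc Circle.isCoveringMap_exp h.lt.le hsnd
    (Circle.exp_zero.trans h.left.symm)
  exact ⟨n, L, hLu, fun s hs => (hfn hs).symm.trans (congrArg (circleAt d n) (hL hs).symm)⟩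

end Excursion

section Straightening

variable {X : Type*} [MetricSpace X] {d : ℕ+ → X} {f : ℝ → ESp X d} {u v : ℝ}

/-- On `[u, v]` the path `g` runs at constant speed `k` times around the circle attached
at `d n`, in the direction given by the sign of `k`. -/
def IsUniformLoop (g : ℝ → ESp X d) (u v : ℝ) (n : ℕ+) (k : ℤ) : Prop :=
  ∀ s ∈ Icc u v, g s = circleAt d n (Circle.exp (2 * Real.pi * k * ((s - u) / (v - u))))

lemma IsUniformLoop.inX {g : ℝ → ESp X d} {n : ℕ+} (h : IsUniformLoop g u v n 0) {s : ℝ}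
    (hs : s ∈ Icc u v) : InX (g s) := by
  simp [h s hs, inX_circleAt_iff]

lemma IsUniformLoop.not_inX {g : ℝ → ESp X d} {n : ℕ+} {k : ℤ} (h : IsUniformLoop g u v n k)
    (hk : |k| = 1) {s : ℝ} (hs : s ∈ Ioo u v) : ¬InX (g s) := by
  have hpos : 0 < (s - u) / (v - u) :=
    div_pos (sub_pos.2 hs.1) (sub_pos.2 (hs.1.trans hs.2))
  have hlt : (s - u) / (v - u) < 1 :=
    (div_lt_one (sub_pos.2 (hs.1.trans hs.2))).2 (sub_lt_sub_right hs.2 u)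
  have habs : |2 * Real.pi * k * ((s - u) / (v - u))| = 2 * Real.pi * ((s - u) / (v - u)) := by
    rw [abs_mul, abs_mul, abs_of_pos Real.two_pi_pos, abs_of_pos hpos, ← Int.cast_abs, hk,
      Int.cast_one, mul_one]
  rw [h s (Ioo_subset_Icc_self hs), inX_circleAt_iff, circle_exp_eq_one_iff_of_abs_lt,
    ← abs_eq_zero, habs]
  · exact (mul_pos Real.two_pi_pos hpos).ne'
  · exact habs ▸ mul_lt_of_lt_one_right Real.two_pi_pos hlt

lemma IsUniformLoop.isWinding_or_isRevWinding {g : ℝ → ESp X d} {n : ℕ+} {k : ℤ}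
    (h : IsUniformLoop g u v n k) (huv : u < v) (hk : |k| = 1) :
    IsWinding d g u v n ∨ IsRevWinding d g u v n := by
  have hcont : ContinuousOn (fun s => (s - u) / (v - u)) (Icc u v) := by fun_prop
  have hmono : MonotoneOn (fun s => (s - u) / (v - u)) (Icc u v) := fun s _ t _ hst =>
    div_le_div_of_nonneg_right (sub_le_sub_right hst u) (sub_pos.2 huv).le
  have hleft : (u - u) / (v - u) = 0 := by simp
  have hright : (v - u) / (v - u) = 1 := div_self (sub_pos.2 huv).ne'
  rcases (abs_eq zero_le_one).1 hk with rfl | rfl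
  · exact Or.inl ⟨_, hcont, hmono, hleft, hright, fun s hs => by simp [h s hs, circleAt]⟩
  · exact Or.inr ⟨_, hcont, hmono, hleft, hright, fun s hs => by simp [h s hs, circleAt]⟩

/-- `K (t, ·)` is a homotopy rel endpoints, inside one circle, from `f` on `[u, v]` to a uniform
loop of degree `0`, `1` or `-1`, which never gets farther from `X` than `f` itself does. -/
structure IsStraightening (f : ℝ → ESp X d) (u v : ℝ) (K : I × ℝ → ESp X d) : Prop where
  continuousOn : ContinuousOn K (univ ×ˢ Icc u v)
  apply_zero : ∀ s ∈ Icc u v, K (0, s) = f s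
  apply_left : ∀ t, K (t, u) = f u
  apply_right : ∀ t, K (t, v) = f v
  fst_eq : ∀ t, ∀ s ∈ Icc u v, (K (t, s)).pt.1 = (f s).pt.1
  height_le : ∀ t, ∀ s ∈ Icc u v, ∃ r ∈ Icc u v, height (K (t, s)) ≤ height (f r)
  apply_one : ∃ n k, (k = 0 ∨ |k| = 1) ∧ IsUniformLoop (fun s => K (1, s)) u v n k

lemma IsStraightening.congr {K H : I × ℝ → ESp X d} (hK : IsStraightening f u v K) (huv : u ≤ v)
    (h : EqOn H K (univ ×ˢ Icc u v)) : IsStraightening f u v H := by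
  have hHK (t : I) {s : ℝ} (hs : s ∈ Icc u v) : H (t, s) = K (t, s) := h ⟨mem_univ t, hs⟩
  refine ⟨hK.continuousOn.congr h, fun s hs => (hHK 0 hs).trans (hK.apply_zero s hs),
    fun t => (hHK t (left_mem_Icc.2 huv)).trans (hK.apply_left t),
    fun t => (hHK t (right_mem_Icc.2 huv)).trans (hK.apply_right t),
    fun t s hs => hHK t hs ▸ hK.fst_eq t s hs, fun t s hs => hHK t hs ▸ hK.height_le t s hs, ?_⟩
  obtain ⟨n, k, hk, hloop⟩ := hK.apply_one
  exact ⟨n, k, hk, fun s hs => (hHK 1 hs).trans (hloop s hs)⟩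

lemma IsExcursion.exists_isStraightening (h : IsExcursion f u v) (hf : Continuous f) :
    ∃ K, IsStraightening f u v K := by
  obtain ⟨n, L, hLu, hL⟩ := h.exists_angle hf
  have hu := left_mem_Icc.2 h.lt.le
  have hv := right_mem_Icc.2 h.lt.le
  have hLv : Circle.exp (L v) = 1 := by
    rw [← inX_circleAt_iff (d := d) (n := n), ← hL v hv]
    exact h.right
  have hLne : ∀ s ∈ Ioo u v, Circle.exp (L s) ≠ 1 := fun s hs hs1 => h.not_inX s hs <| by
    rwa [hL s (Ioo_subset_Icc_self hs), inX_circleAt_iff]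
  refine ⟨fun q => circleAt d n (Circle.exp (straighten L u v q.1 q.2)), ?_, fun s hs => ?_,
    fun t => ?_, fun t => ?_, fun t s hs => ?_, fun t s hs => ?_, ?_⟩
  · have : Continuous fun q : I × ℝ => straighten L u v q.1 q.2 := by
      unfold straighten
      fun_prop
    exact ((isEmbedding_circleAt n).continuous.comp (Circle.exp.continuous.comp this)).continuousOn
  · rw [hL s hs, Icc.coe_zero, straighten_zero]
  · rw [hL u hu, straighten_left]
  · rw [hL v hv, straighten_right h.lt]
  · rw [hL s hs]
    rfl
  · obtain ⟨r, hr, hle⟩ :=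
      exists_dist_exp_straighten_le h.lt.le L.continuous.continuousOn hLu hLv t.2 hs
    refine ⟨r, hr, ?_⟩
    rw [hL r hr, height_circleAt, height_circleAt]
    exact mul_le_mul_of_nonneg_left hle (wt_nonneg d _)
  · obtain ⟨k, hk, hLk⟩ : ∃ k : ℤ, (k = 0 ∨ |k| = 1) ∧ L v = 2 * Real.pi * k := by
      rcases lift_right_eq_zero_or_abs_eq h.lt.le L.continuous.continuousOn hLu hLv hLne
        with h0 | h1
      · exact ⟨0, by simp [h0]⟩
      · rcases (abs_eq Real.two_pi_pos.le).1 h1 with h1 | h1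
        · exact ⟨1, by simp [h1]⟩
        · exact ⟨-1, by simp [h1]⟩
    refine ⟨n, k, hk, fun s _ => ?_⟩
    simp only [Icc.coe_one, straighten_one hLu, hLk]

/-- The map which is `f` at the times when `f` is in `X` and `K u v` on each excursion `(u, v)`. -/
def glue (f : ℝ → ESp X d) (K : ℝ → ℝ → I × ℝ → ESp X d) (q : I × ℝ) : ESp X d :=
  if h : ∃ p : ℝ × ℝ, IsExcursion f p.1 p.2 ∧ q.2 ∈ Ioo p.1 p.2 then
    K h.choose.1 h.choose.2 q
  else f q.2

lemma glue_of_inX (K : ℝ → ℝ → I × ℝ → ESp X d) {q : I × ℝ} (hq : InX (f q.2)) :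
    glue f K q = f q.2 :=
  dif_neg fun ⟨_, hp, hqp⟩ => hp.not_inX _ hqp hq

lemma IsExcursion.eqOn_glue (h : IsExcursion f u v) {K : ℝ → ℝ → I × ℝ → ESp X d}
    (hK : IsStraightening f u v (K u v)) : EqOn (glue f K) (K u v) (univ ×ˢ Icc u v) := by
  rintro ⟨t, s⟩ ⟨-, hs⟩
  rcases eq_endpoints_or_mem_Ioo_of_mem_Icc hs with rfl | rfl | hs
  · rw [glue_of_inX K h.left, hK.apply_left]
  · rw [glue_of_inX K h.right, hK.apply_right]
  · have hex : ∃ p : ℝ × ℝ, IsExcursion f p.1 p.2 ∧ s ∈ Ioo p.1 p.2 := ⟨(u, v), h, hs⟩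
    obtain ⟨hu, hv⟩ := h.eq_of_mem_Ioo hex.choose_spec.1 hs hex.choose_spec.2
    rw [glue, dif_pos hex, ← hu, ← hv]

variable {H : I × ℝ → ESp X d}

-- Only finitely many excursions of `f` reach height `ε`, so the set is a finite union of sets
-- which are closed because `H` is continuous along each excursion.
lemma isClosed_setOf_le_height (hf : Continuous f) (hbdd : Bornology.IsBounded {s | ¬InX (f s)})
    (hX : ∀ t s, InX (f s) → H (t, s) = f s)
    (hH : ∀ u v, IsExcursion f u v → IsStraightening f u v H) {ε : ℝ} (hε : 0 < ε) :
    IsClosed {q | ε ≤ height (H q)} := by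
  set S := {p : ℝ × ℝ | IsExcursion f p.1 p.2 ∧ ∃ r ∈ Icc p.1 p.2, ε ≤ height (f r)}
  have hunion : {q | ε ≤ height (H q)} =
      ⋃ p ∈ S, (univ ×ˢ Icc p.1 p.2) ∩ (fun q => height (H q)) ⁻¹' Ici ε := by
    refine Subset.antisymm (fun ⟨t, s⟩ hq => ?_) (iUnion₂_subset fun p _ q hq => hq.2)
    have hs : ¬InX (f s) := fun hs => (hε.trans_le hq).ne' <| by
      rw [hX t s hs, height_of_inX hs]
    obtain ⟨u, v, huv, hsuv⟩ := exists_isExcursion hf hbdd hs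
    have hsIcc := Ioo_subset_Icc_self hsuv
    obtain ⟨r, hr, hle⟩ := (hH u v huv).height_le t s hsIcc
    exact mem_biUnion (x := (u, v)) ⟨huv, r, hr, le_trans hq hle⟩ ⟨⟨mem_univ t, hsIcc⟩, hq⟩
  rw [hunion]
  refine (finite_setOf_isExcursion_le_height hf hbdd hε).isClosed_biUnion fun p hp => ?_
  have hcont := continuous_height.comp_continuousOn (hH _ _ hp.1).continuousOn
  exact hcont.preimage_isClosed_of_isClosed (isClosed_univ.prod isClosed_Icc) isClosed_Ici

lemma continuous_of_isStraightening (hf : Continuous f)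
    (hbdd : Bornology.IsBounded {s | ¬InX (f s)})
    (hX : ∀ t s, InX (f s) → H (t, s) = f s)
    (hH : ∀ u v, IsExcursion f u v → IsStraightening f u v H) : Continuous H := by
  rw [continuous_iff_continuousAt]
  rintro ⟨t, s⟩
  by_cases hs : InX (f s)
  · have hfst : ∀ q, (H q).pt.1 = (f q.2).pt.1 := fun ⟨t', s'⟩ => by
      by_cases hs' : InX (f s')
      · rw [hX t' s' hs']
      · obtain ⟨u, v, huv, hsuv⟩ := exists_isExcursion hf hbdd hs'
        exact (hH u v huv).fst_eq t' s' (Ioo_subset_Icc_self hsuv)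
    rw [ContinuousAt, hX t s hs, tendsto_nhds_iff_of_inX hs]
    simp only [hfst]
    refine ⟨((continuous_fst_pt.comp hf).comp continuous_snd).tendsto (t, s),
      Metric.tendsto_nhds.2 fun ε hε => ?_⟩
    have hmem : (t, s) ∈ {q | ε ≤ height (H q)}ᶜ := by
      simpa [hX t s hs, height_of_inX hs] using hε
    filter_upwards [(isClosed_setOf_le_height hf hbdd hX hH hε).compl_mem_nhds hmem] with q hq
    rw [Real.dist_0_eq_abs, abs_of_nonneg (height_nonneg _)]
    exact not_le.1 hq
  · obtain ⟨u, v, huv, hsuv⟩ := exists_isExcursion hf hbdd hs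
    exact (hH u v huv).continuousOn.continuousAt
      (prod_mem_nhds univ_mem (Icc_mem_nhds hsuv.1 hsuv.2))

lemma exists_forall_isStraightening (hf : Continuous f)
    (hbdd : Bornology.IsBounded {s | ¬InX (f s)}) :
    ∃ H : C(I × ℝ, ESp X d), (∀ t s, InX (f s) → H (t, s) = f s) ∧
      ∀ u v, IsExcursion f u v → IsStraightening f u v H := by
  have hloc (u v : ℝ) : ∃ K, IsExcursion f u v → IsStraightening f u v K := by
    by_cases h : IsExcursion f u v
    · exact (h.exists_isStraightening hf).imp fun _ hK _ => hK
    · exact ⟨fun q => f q.2, fun h' => absurd h' h⟩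
  choose K hK using hloc
  have hX (t : I) (s : ℝ) (hs : InX (f s)) : glue f K (t, s) = f s := glue_of_inX K hs
  have hglue (u v : ℝ) (h : IsExcursion f u v) : IsStraightening f u v (glue f K) :=
    (hK u v h).congr h.lt.le (h.eqOn_glue (hK u v h))
  exact ⟨⟨glue f K, continuous_of_isStraightening hf hbdd hX hglue⟩, hX, hglue⟩

lemma isWinding_or_isRevWinding_of_isStraightening (hf : Continuous f)
    (hbdd : Bornology.IsBounded {s | ¬InX (f s)}) (hX : ∀ t s, InX (f s) → H (t, s) = f s)
    (hH : ∀ u v, IsExcursion f u v → IsStraightening f u v H)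
    (h : IsExcursion (fun s => H (1, s)) u v) :
    ∃ n, IsWinding d (fun s => H (1, s)) u v n ∨ IsRevWinding d (fun s => H (1, s)) u v n := by
  obtain ⟨m, hm⟩ := exists_between h.lt
  have hHX (s : ℝ) (hs : InX (f s)) : InX (H (1, s)) := by rwa [hX 1 s hs]
  obtain ⟨u', v', h', hm'⟩ :=
    exists_isExcursion hf hbdd fun hmX => h.not_inX m hm (hHX m hmX)
  obtain ⟨n, k, hk, hloop⟩ := (hH u' v' h').apply_one
  have hk1 : |k| = 1 := hk.resolve_left fun h0 =>
    h.not_inX m hm ((h0 ▸ hloop).inX (Ioo_subset_Icc_self hm'))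
  have hexc : IsExcursion (fun s => H (1, s)) u' v' :=
    ⟨h'.lt, hHX u' h'.left, hHX v' h'.right, fun _ => hloop.not_inX hk1⟩
  obtain ⟨rfl, rfl⟩ := h.eq_of_mem_Ioo hexc hm hm'
  exact ⟨n, hloop.isWinding_or_isRevWinding h.lt hk1⟩

theorem exists_homotopicRel_windings (f : C(ℝ, ESp X d))
    (hbdd : Bornology.IsBounded {s | ¬InX (f s)}) :
    ∃ g : C(ℝ, ESp X d), f.HomotopicRel g {s | InX (f s)} ∧
      ∀ u v, IsExcursion g u v → ∃ n, IsWinding d g u v n ∨ IsRevWinding d g u v n := by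
  obtain ⟨H, hX, hH⟩ := exists_forall_isStraightening f.continuous hbdd
  have hzero (s : ℝ) : H (0, s) = f s := by
    by_cases hs : InX (f s)
    · exact hX 0 s hs
    · obtain ⟨u, v, huv, hsuv⟩ := exists_isExcursion f.continuous hbdd hs
      exact (hH u v huv).apply_zero s (Ioo_subset_Icc_self hsuv)
  exact ⟨⟨fun s => H (1, s), by fun_prop⟩, ⟨⟨H, hzero, fun _ => rfl⟩, fun t s hs => hX t s hs⟩,
    fun _ _ => isWinding_or_isRevWinding_of_isStraightening f.continuous hbdd hX hH⟩

lemma exists_continuousMap_eqOn_Icc {a b : ℝ} (hab : a ≤ b) (hf : ContinuousOn f (Icc a b))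
    (ha : InX (f a)) (hb : InX (f b)) :
    ∃ F : C(ℝ, ESp X d), EqOn F f (Icc a b) ∧ Bornology.IsBounded {s | ¬InX (F s)} := by
  refine ⟨⟨_, (continuousOn_iff_continuous_domRestrict.1 hf).Icc_extend' (h := hab)⟩,
    fun s hs => IccExtend_of_mem hab ((Icc a b).domRestrict f) hs,
    (isBounded_Icc a b).subset fun s hs => ?_⟩
  by_contra hsIcc
  rcases not_and_or.1 hsIcc with h | h
  · exact hs (by simpa [IccExtend_of_le_left hab _ (not_le.1 h).le])
  · exact hs (by simpa [IccExtend_of_right_le hab _ (not_le.1 h).le])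

lemma htpyRel_of_homotopyRel {F G : C(ℝ, ESp X d)} {S : Set ℝ} {a b : ℝ} (hab : a ≤ b)
    (hfF : EqOn F f (Icc a b)) (ha : a ∈ S) (hb : b ∈ S) (H : F.HomotopyRel G S) :
    HtpyRel d f G a b := by
  refine ⟨fun q => H (projIcc 0 1 zero_le_one q.2, q.1), ?_, fun s hs => ?_, fun t _ => ?_⟩
  · exact (H.continuous.comp
      ((continuous_projIcc.comp continuous_snd).prodMk continuous_fst)).continuousOn
  · simp [hfF hs]
  · exact ⟨(H.eq_fst _ ha).trans (hfF (left_mem_Icc.2 hab)),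
      (H.eq_fst _ hb).trans (hfF (right_mem_Icc.2 hab))⟩

end Straightening

/-- Every path in `E(X,D)` with endpoints in `X` is homotopic rel endpoints to a proper
path. -/
theorem exists_proper_path {X : Type*} [MetricSpace X] (d : ℕ+ → X)
    (f : ℝ → ESp X d) (a b : ℝ) (hab : a ≤ b)
    (hf : ContinuousOn f (Set.Icc a b)) (ha : InX (f a)) (hb : InX (f b)) :
    ∃ g : ℝ → ESp X d, IsProper d g a b ∧ g a = f a ∧ g b = f b ∧
      HtpyRel d f g a b := by
  obtain ⟨F, hfF, hbdd⟩ := exists_continuousMap_eqOn_Icc hab hf ha hb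
  have hFa : F a = f a := hfF (left_mem_Icc.2 hab)
  have hFb : F b = f b := hfF (right_mem_Icc.2 hab)
  obtain ⟨g, ⟨H⟩, hg⟩ := exists_homotopicRel_windings F hbdd
  have haX : InX (F a) := hFa ▸ ha
  have hbX : InX (F b) := hFb ▸ hb
  have hga : g a = f a := (H.fst_eq_snd haX).symm.trans hFa
  have hgb : g b = f b := (H.fst_eq_snd hbX).symm.trans hFb
  refine ⟨g, ⟨g.continuous.continuousOn, hga ▸ ha, hgb ▸ hb, ?_⟩, hga, hgb,
    htpyRel_of_homotopyRel hab hfF haX hbX H⟩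
  exact fun u v _ huv _ hu hv hne _ => hg u v ⟨huv, hu, hv, hne⟩

end EarringPaper
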